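/- Let α ∈ (0,1). There exists a constant C > 0 (depending only on α) such that for every sequence of real coefficients (c_n)_{n≥1} with Σ_{n=1}^∞ c_n² < ∞, every sequence of positive reals (λ_n)_{n≥1}, and every t > 0, one has Σ_{n=1}^∞ c_n² λ_n² E_α(−λ_n t^α)² ≤ C² t^(−2α) Σ_{n=1}^∞ c_n² (in particular the left-hand series converges). -/

import Mathlib

/-- The Mittag-Leffler function `E_α(x) = ∑_{k=0}^∞ x^k / Γ(αk + 1)`. -/
noncomputable def mittagLeffler (α x : ℝ) : ℝ :=
  ∑' k : ℕ, x ^ k / Real.Gamma (α * k + 1)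

/-!
For `x ≥ 0` the function `u t = E_α(-x t^α)` solves the fractional relaxation equation
`u + x I^α u = 1`, where `I^α` is the Riemann–Liouville integral. Multiplying a Volterra equation
`z + x I^α z = g` by `t^(1-α)` turns the kernel into `(t / (t - s))^(1-α)`, which decreases in `t`;
hence `z` cannot reach zero if `z 0 > 0` and `t^(1-α) g t` increases. This applies to `u` and to
each difference `u - u (· + h)`, so `u` is positive and decreasing. Then
`1 ≥ x I^α u t ≥ u t * x t^α / Γ(α + 1)`, and `t = 1` gives `x E_α(-x) ≤ Γ(α + 1)`.
-/

open Filter MeasureTheory Set Topology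

section FracIntegral

/-- The part of the Riemann–Liouville integral of order `α` of `f` at time `t` that is contributed
by the values of `f` on `[a, b]`. The full integral with base point `0`, written `I^α f t` in the
literature, is `fracIntegral α f 0 t t`; separating `b` from `t` lets it be split along `[0, t]`. -/
noncomputable def fracIntegral (α : ℝ) (f : ℝ → ℝ) (a b t : ℝ) : ℝ :=
  (Real.Gamma α)⁻¹ * ∫ s in a..b, (t - s) ^ (α - 1) * f s

variable {α : ℝ} {f g : ℝ → ℝ} {a b t : ℝ}

lemma intervalIntegrable_sub_rpow_mul (hα : 0 < α) (hf : Continuous f) (a b t : ℝ) :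
    IntervalIntegrable (fun s ↦ (t - s) ^ (α - 1) * f s) volume a b := by
  have h : IntervalIntegrable (fun s : ℝ ↦ s ^ (α - 1)) volume (t - a) (t - b) :=
    intervalIntegral.intervalIntegrable_rpow' (by linarith)
  have h_sub := h.comp_sub_left t
  simp only [sub_sub_cancel] at h_sub
  exact h_sub.mul_continuousOn hf.continuousOn

lemma fracIntegral_same (α : ℝ) (f : ℝ → ℝ) (a t : ℝ) : fracIntegral α f a a t = 0 := by
  simp [fracIntegral]

lemma fracIntegral_congr (h : EqOn f g (uIcc a b)) :
    fracIntegral α f a b t = fracIntegral α g a b t := by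
  rw [fracIntegral, fracIntegral]
  exact congrArg _ (intervalIntegral.integral_congr fun s hs ↦ by simp only [h hs])

lemma fracIntegral_add_adjacent (hα : 0 < α) (hf : Continuous f) (a b c t : ℝ) :
    fracIntegral α f a b t + fracIntegral α f b c t = fracIntegral α f a c t := by
  rw [fracIntegral, fracIntegral, fracIntegral, ← mul_add,
    intervalIntegral.integral_add_adjacent_intervals (intervalIntegrable_sub_rpow_mul hα hf a b t)
      (intervalIntegrable_sub_rpow_mul hα hf b c t)]

lemma fracIntegral_sub (hα : 0 < α) (hf : Continuous f) (hg : Continuous g) (a b t : ℝ) :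
    fracIntegral α (fun s ↦ f s - g s) a b t = fracIntegral α f a b t - fracIntegral α g a b t := by
  simp only [fracIntegral, mul_sub]
  rw [intervalIntegral.integral_sub (intervalIntegrable_sub_rpow_mul hα hf a b t)
    (intervalIntegrable_sub_rpow_mul hα hg a b t), mul_sub]

lemma fracIntegral_const_mul (α : ℝ) (f : ℝ → ℝ) (c a b t : ℝ) :
    fracIntegral α (fun s ↦ c * f s) a b t = c * fracIntegral α f a b t := by
  simp only [fracIntegral, mul_left_comm _ c, intervalIntegral.integral_const_mul]

lemma fracIntegral_comp_add_right (α : ℝ) (f : ℝ → ℝ) (h a b t : ℝ) :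
    fracIntegral α (fun s ↦ f (s + h)) a b t = fracIntegral α f (a + h) (b + h) (t + h) := by
  simp [fracIntegral, ← intervalIntegral.integral_comp_add_right]

lemma fracIntegral_const (hα : 0 < α) (c a t : ℝ) :
    fracIntegral α (fun _ ↦ c) a t t = c * ((t - a) ^ α / Real.Gamma (α + 1)) := by
  have h_int : ∫ s in a..t, (t - s) ^ (α - 1) = (t - a) ^ α / α := by
    rw [intervalIntegral.integral_comp_sub_left (fun x ↦ x ^ (α - 1)) t,
      integral_rpow (Or.inl (by linarith))]
    simp [Real.zero_rpow hα.ne']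
  rw [fracIntegral, intervalIntegral.integral_mul_const, h_int, Real.Gamma_add_one hα.ne']
  ring

lemma fracIntegral_mono (hα : 0 < α) (hf : Continuous f) (hg : Continuous g) (hab : a ≤ b)
    (hbt : b ≤ t) (hfg : ∀ s ∈ Ioo a b, f s ≤ g s) :
    fracIntegral α f a b t ≤ fracIntegral α g a b t := by
  refine mul_le_mul_of_nonneg_left (intervalIntegral.integral_mono_on_of_le_Ioo hab
    (intervalIntegrable_sub_rpow_mul hα hf a b t) (intervalIntegrable_sub_rpow_mul hα hg a b t)
    fun s hs ↦ ?_) (inv_pos.mpr (Real.Gamma_pos_of_pos hα)).le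
  have hst : 0 ≤ t - s := by linarith [hs.2]
  exact mul_le_mul_of_nonneg_left (hfg s hs) (by positivity)

lemma fracIntegral_pos (hα : 0 < α) (hf : Continuous f) (hab : a < b) (hbt : b ≤ t)
    (hf_pos : ∀ s ∈ Ioo a b, 0 < f s) : 0 < fracIntegral α f a b t := by
  refine mul_pos (inv_pos.mpr (Real.Gamma_pos_of_pos hα))
    (intervalIntegral.intervalIntegral_pos_of_pos_on (intervalIntegrable_sub_rpow_mul hα hf a b t)
      (fun s hs ↦ ?_) hab)
  have hst : 0 < t - s := by linarith [hs.2]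
  exact mul_pos (by positivity) (hf_pos s hs)

lemma rpow_mul_rpow_le_of_mul_le_mul (hα1 : α ≤ 1) {p q x y : ℝ} (hp : 0 ≤ p) (hq : 0 ≤ q)
    (hx : 0 < x) (hy : 0 < y) (h : p * y ≤ q * x) :
    p ^ (1 - α) * x ^ (α - 1) ≤ q ^ (1 - α) * y ^ (α - 1) := by
  rw [← neg_sub 1 α, Real.rpow_neg hx.le, Real.rpow_neg hy.le, ← div_eq_mul_inv, ← div_eq_mul_inv,
    ← Real.div_rpow hp hx.le, ← Real.div_rpow hq hy.le]
  exact Real.rpow_le_rpow (by positivity) ((div_le_div_iff₀ hx hy).mpr h) (by linarith)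

lemma rpow_mul_fracIntegral_le (hα : 0 < α) (hα1 : α ≤ 1) (hf : Continuous f) (hab : a ≤ b)
    (hf_nonneg : ∀ s ∈ Ioo a b, 0 ≤ f s) {p q u : ℝ} (hp : 0 ≤ p) (hq : 0 ≤ q) (hbt : b ≤ t)
    (hbu : b ≤ u) (h : ∀ s ∈ Ioo a b, p * (u - s) ≤ q * (t - s)) :
    p ^ (1 - α) * fracIntegral α f a b t ≤ q ^ (1 - α) * fracIntegral α f a b u := by
  rw [fracIntegral, fracIntegral, mul_left_comm, mul_left_comm (q ^ (1 - α)),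
    ← intervalIntegral.integral_const_mul (p ^ (1 - α)),
    ← intervalIntegral.integral_const_mul (q ^ (1 - α))]
  refine mul_le_mul_of_nonneg_left (intervalIntegral.integral_mono_on_of_le_Ioo hab
    ((intervalIntegrable_sub_rpow_mul hα hf a b t).const_mul _)
    ((intervalIntegrable_sub_rpow_mul hα hf a b u).const_mul _) fun s hs ↦ ?_)
    (inv_pos.mpr (Real.Gamma_pos_of_pos hα)).le
  rw [← mul_assoc, ← mul_assoc]
  exact mul_le_mul_of_nonneg_right (rpow_mul_rpow_le_of_mul_le_mul hα1 hp hq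
    (by linarith [hs.2]) (by linarith [hs.2]) (h s hs)) (hf_nonneg s hs)

lemma hasSum_fracIntegral {ι : Type*} [Countable ι] {F : ι → ℝ → ℝ} {M : ι → ℝ} (hα : 0 < α)
    (hF : ∀ i, Continuous (F i)) (hM : Summable M) (hab : a ≤ b) (hbt : b ≤ t)
    (hFM : ∀ i, ∀ s ∈ Ioc a b, |F i s| ≤ M i) :
    HasSum (fun i ↦ fracIntegral α (F i) a b t) (fracIntegral α (fun s ↦ ∑' i, F i s) a b t) := by
  rw [← uIoc_of_le hab] at hFM
  have h_summable : ∀ s ∈ uIoc a b, Summable fun i ↦ F i s :=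
    fun s hs ↦ hM.of_norm_bounded fun i ↦ hFM i s hs
  have hint := fun i ↦ intervalIntegrable_sub_rpow_mul hα (hF i) a b t
  have h := intervalIntegral.hasSum_integral_of_dominated_convergence
    (F := fun i s ↦ (t - s) ^ (α - 1) * F i s) (f := fun s ↦ (t - s) ^ (α - 1) * ∑' i, F i s)
    (fun i s ↦ (t - s) ^ (α - 1) * M i) (fun i ↦ (hint i).def'.aestronglyMeasurable)
    (fun i ↦ ae_of_all _ fun s hs ↦ ?_) (ae_of_all _ fun s _ ↦ hM.mul_left _) ?_
    (ae_of_all _ fun s hs ↦ (h_summable s hs).hasSum.mul_left _)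
  · exact h.mul_left _
  · have hst : 0 ≤ t - s := by
      rw [uIoc_of_le hab] at hs
      linarith [hs.2]
    rw [norm_mul, Real.norm_of_nonneg (by positivity), Real.norm_eq_abs]
    exact mul_le_mul_of_nonneg_left (hFM i s hs) (by positivity)
  · simp only [tsum_mul_left]
    exact intervalIntegrable_sub_rpow_mul hα continuous_const a b t

lemma integral_sub_rpow_mul_rpow {β : ℝ} (hα : 0 < α) (hβ : 0 < β) (ht : 0 < t) :
    ∫ s in (0 : ℝ)..t, (t - s) ^ (α - 1) * s ^ (β - 1) =
      Real.Gamma α * Real.Gamma β / Real.Gamma (α + β) * t ^ (α + β - 1) := by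
  have h := Complex.betaIntegral_scaled (β : ℂ) (α : ℂ) ht
  rw [Complex.betaIntegral_eq_Gamma_mul_div _ _ (by simpa) (by simpa), ← Complex.ofReal_add] at h
  simp only [Complex.Gamma_ofReal] at h
  apply Complex.ofReal_injective
  push_cast [Complex.ofReal_cpow ht.le]
  rw [mul_comm (Real.Gamma α : ℂ), mul_comm _ ((t : ℂ) ^ _), add_comm α β,
    ← Complex.ofReal_add, add_comm α β, ← h, ← intervalIntegral.integral_ofReal,
    intervalIntegral.integral_of_le ht.le, intervalIntegral.integral_of_le ht.le]
  refine setIntegral_congr_fun measurableSet_Ioc fun s hs ↦ ?_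
  push_cast [Complex.ofReal_cpow (sub_nonneg.mpr hs.2), Complex.ofReal_cpow hs.1.le]
  ring

lemma fracIntegral_rpow {β : ℝ} (hα : 0 < α) (hβ : -1 < β) (ht : 0 < t) :
    fracIntegral α (· ^ β) 0 t t =
      Real.Gamma (β + 1) / Real.Gamma (α + β + 1) * t ^ (α + β) := by
  have h := integral_sub_rpow_mul_rpow hα (neg_lt_iff_pos_add.mp hβ) ht
  rw [add_sub_cancel_right, ← add_assoc, add_sub_cancel_right] at h
  rw [fracIntegral, h, mul_div_assoc, mul_assoc,
    inv_mul_cancel_left₀ (Real.Gamma_pos_of_pos hα).ne']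

end FracIntegral

section MittagLeffler

variable {α : ℝ}

lemma rpow_mul_Gamma_add_one_le (hα : 0 < α) {x : ℝ} (hx : 0 < x) :
    x ^ α * Real.Gamma (x + 1) ≤ Real.Gamma (x + 1 + α) := by
  have hΓ := Real.Gamma_pos_of_pos hx
  have hΓ1 : 0 < Real.Gamma (x + 1) := Real.Gamma_pos_of_pos (by positivity)
  have hslope := Real.convexOn_log_Gamma.slope_mono_adjacent (x := x) (y := x + 1)
    (z := x + 1 + α) hx (by simp only [mem_Ioi]; positivity) (by linarith) (by linarith)
  have hlog : Real.log (Real.Gamma (x + 1)) = Real.log x + Real.log (Real.Gamma x) := by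
    rw [Real.Gamma_add_one hx.ne', Real.log_mul hx.ne' hΓ.ne']
  simp only [Function.comp_apply, add_sub_cancel_left, div_one, le_div_iff₀ hα] at hslope
  rw [← Real.log_le_log_iff (by positivity) (Real.Gamma_pos_of_pos (by positivity)),
    Real.log_mul (by positivity) hΓ1.ne', Real.log_rpow hx]
  linear_combination hslope - α * hlog

lemma Gamma_mul_natCast_add_one_pos (hα : 0 ≤ α) (k : ℕ) : 0 < Real.Gamma (α * k + 1) :=
  Real.Gamma_pos_of_pos (by positivity)

lemma summable_mittagLeffler (hα : 0 < α) (x : ℝ) :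
    Summable fun k : ℕ ↦ x ^ k / Real.Gamma (α * k + 1) := by
  have hΓ := Gamma_mul_natCast_add_one_pos hα.le
  rcases eq_or_ne x 0 with rfl | hx
  · exact summable_of_ne_finset_zero (s := {0}) fun k hk ↦ by simp_all
  have hlim : Tendsto (fun k : ℕ ↦ |x| / (α * k) ^ α) atTop (𝓝 0) :=
    ((tendsto_rpow_atTop hα).comp
      (tendsto_natCast_atTop_atTop.const_mul_atTop hα)).const_div_atTop _
  refine summable_of_ratio_test_tendsto_lt_one one_pos
    (Eventually.of_forall fun k ↦ div_ne_zero (pow_ne_zero _ hx) (hΓ k).ne')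
    (squeeze_zero' (Eventually.of_forall fun k ↦ by positivity) ?_ hlim)
  filter_upwards [eventually_gt_atTop 0] with k hk
  have hk' : 0 < α * k := by positivity
  have hratio : (α * k) ^ α * Real.Gamma (α * k + 1) ≤ Real.Gamma (α * (k + 1 : ℕ) + 1) := by
    convert rpow_mul_Gamma_add_one_le hα hk' using 2
    push_cast
    ring
  calc ‖x ^ (k + 1) / Real.Gamma (α * (k + 1 : ℕ) + 1)‖ / ‖x ^ k / Real.Gamma (α * k + 1)‖
      = |x| * Real.Gamma (α * k + 1) / Real.Gamma (α * (k + 1 : ℕ) + 1) := by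
        rw [norm_div, norm_div, norm_pow, norm_pow, Real.norm_of_nonneg (hΓ k).le,
          Real.norm_of_nonneg (hΓ (k + 1)).le, Real.norm_eq_abs]
        field_simp
        ring
    _ ≤ |x| * Real.Gamma (α * k + 1) / ((α * k) ^ α * Real.Gamma (α * k + 1)) := by
        have := hΓ k
        gcongr
    _ = |x| / (α * k) ^ α := mul_div_mul_right _ _ (hΓ k).ne'

lemma continuous_mittagLeffler (hα : 0 < α) : Continuous (mittagLeffler α) := by
  refine continuous_iff_continuousAt.mpr fun x ↦ ?_
  have hball : ContinuousOn (mittagLeffler α) (Metric.ball 0 (|x| + 1)) := by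
    refine continuousOn_tsum (fun k ↦ by fun_prop) (summable_mittagLeffler hα (|x| + 1))
      fun k y hy ↦ ?_
    have hΓ := Gamma_mul_natCast_add_one_pos hα.le k
    have hy' : ‖y‖ ≤ |x| + 1 := (mem_ball_zero_iff.mp hy).le
    rw [norm_div, norm_pow, Real.norm_of_nonneg hΓ.le]
    gcongr
  exact hball.continuousAt (Metric.isOpen_ball.mem_nhds (by simp))

lemma mittagLeffler_zero (α : ℝ) : mittagLeffler α 0 = 1 := by
  rw [mittagLeffler, tsum_eq_single 0 fun k hk ↦ by simp [hk]]
  simp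

lemma mul_fracIntegral_mittagLeffler_term (hα : 0 < α) (c : ℝ) {t : ℝ} (ht : 0 < t) (k : ℕ) :
    c * fracIntegral α (fun s ↦ (c * s ^ α) ^ k / Real.Gamma (α * k + 1)) 0 t t =
      (c * t ^ α) ^ (k + 1) / Real.Gamma (α * (k + 1 : ℕ) + 1) := by
  have hpow : EqOn (fun s ↦ (c * s ^ α) ^ k / Real.Gamma (α * k + 1))
      (fun s ↦ c ^ k / Real.Gamma (α * k + 1) * s ^ (α * k)) (uIcc 0 t) := fun s hs ↦ by
    rw [uIcc_of_le ht.le] at hs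
    simp only [mul_pow, Real.rpow_mul_natCast hs.1]
    ring
  have hexp : α + α * k = α * (k + 1 : ℕ) := by push_cast; ring
  rw [fracIntegral_congr hpow, fracIntegral_const_mul,
    fracIntegral_rpow hα (neg_one_lt_zero.trans_le (by positivity)) ht, hexp,
    Real.rpow_mul_natCast ht.le, mul_pow c, pow_succ' c]
  field_simp [(Gamma_mul_natCast_add_one_pos hα.le k).ne']

theorem mittagLeffler_mul_rpow_eq (hα : 0 < α) (c : ℝ) {t : ℝ} (ht : 0 < t) :
    mittagLeffler α (c * t ^ α) =
      1 + c * fracIntegral α (fun s ↦ mittagLeffler α (c * s ^ α)) 0 t t := by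
  have hcont := Real.continuous_rpow_const hα.le
  have hsum : HasSum (fun k : ℕ ↦ (c * t ^ α) ^ (k + 1) / Real.Gamma (α * (k + 1 : ℕ) + 1))
      (c * fracIntegral α (fun s ↦ mittagLeffler α (c * s ^ α)) 0 t t) := by
    simp only [← mul_fracIntegral_mittagLeffler_term hα c ht]
    refine (hasSum_fracIntegral hα (fun k ↦ by fun_prop) (summable_mittagLeffler hα (|c| * t ^ α))
      ht.le le_rfl fun k s hs ↦ ?_).mul_left c
    have hs0 : 0 ≤ s := hs.1.le
    have hΓ := Gamma_mul_natCast_add_one_pos hα.le k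
    rw [abs_div, abs_pow, abs_mul, abs_of_pos hΓ, abs_of_nonneg (Real.rpow_nonneg hs0 α)]
    gcongr
    exact hs.2
  rw [← hsum.tsum_eq, mittagLeffler, (summable_mittagLeffler hα _).tsum_eq_zero_add]
  simp

end MittagLeffler

section Volterra

/-- `z` solves on `[0, ∞)` the Volterra equation `z + c I^α z = g` of the second kind. For `g = 1`
this is the integral form of the fractional relaxation equation `D^α z = -c z`, `z 0 = 1`. -/
def SolvesVolterra (α c : ℝ) (g z : ℝ → ℝ) : Prop :=
  ∀ t, 0 ≤ t → z t + c * fracIntegral α z 0 t t = g t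

variable {α c : ℝ} {g u z : ℝ → ℝ}

lemma SolvesVolterra.apply_zero (h : SolvesVolterra α c g z) : z 0 = g 0 := by
  simpa [fracIntegral_same] using h 0 le_rfl

lemma SolvesVolterra.rpow_mul_le_rpow_mul_add (h : SolvesVolterra α c g z) (hα : 0 < α)
    (hα1 : α ≤ 1) (hc : 0 ≤ c) (hz : Continuous z)
    (hg : MonotoneOn (fun t ↦ t ^ (1 - α) * g t) (Ioi 0)) {t₁ t₀ : ℝ} (ht₁ : 0 < t₁) (ht : t₁ ≤ t₀)
    (hz_nonneg : ∀ s ∈ Ioo 0 t₁, 0 ≤ z s) :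
    t₁ ^ (1 - α) * z t₁ ≤ t₀ ^ (1 - α) * (z t₀ + c * fracIntegral α z t₁ t₀ t₀) := by
  have ht₀ : 0 < t₀ := ht₁.trans_le ht
  have h_past : t₀ ^ (1 - α) * fracIntegral α z 0 t₁ t₀ ≤
      t₁ ^ (1 - α) * fracIntegral α z 0 t₁ t₁ :=
    rpow_mul_fracIntegral_le hα hα1 hz ht₁.le hz_nonneg ht₀.le ht₁.le ht le_rfl
      fun s hs ↦ by nlinarith [hs.1]
  have h_forcing : t₁ ^ (1 - α) * g t₁ ≤ t₀ ^ (1 - α) * g t₀ := hg ht₁ ht₀ ht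
  rw [← h t₁ ht₁.le, ← h t₀ ht₀.le, ← fracIntegral_add_adjacent hα hz 0 t₁ t₀ t₀] at h_forcing
  linear_combination h_forcing + c * h_past

lemma exists_nonpos_forall_Ico_pos (hz : Continuous z) (hz0 : 0 < z 0) {t : ℝ} (ht : 0 ≤ t)
    (hzt : z t ≤ 0) : ∃ t₀, 0 < t₀ ∧ z t₀ ≤ 0 ∧ ∀ s ∈ Ico 0 t₀, 0 < z s := by
  obtain ⟨t₀, ⟨ht₀, hzt₀⟩, h_least⟩ : ∃ t₀, IsLeast (Ici 0 ∩ z ⁻¹' Iic 0) t₀ :=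
    ⟨_, (isClosed_Ici.inter (isClosed_Iic.preimage hz)).isLeast_csInf ⟨t, ht, hzt⟩
      ⟨0, fun _ hs ↦ hs.1⟩⟩
  refine ⟨t₀, lt_of_le_of_ne ht₀ ?_, hzt₀, fun s hs ↦ ?_⟩
  · rintro rfl
    exact hz0.not_ge hzt₀
  · by_contra! hzs
    exact hs.2.not_ge (h_least ⟨hs.1, hzs⟩)

lemma exists_lt_forall_Icc_mul_rpow_lt_rpow (hα : 0 < α) (β : ℝ) {t₀ : ℝ} (ht₀ : 0 < t₀) (C : ℝ) :
    ∃ a < t₀, ∀ s ∈ Icc a t₀, 0 < s ∧ C * (t₀ - s) ^ α < s ^ β := by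
  refine mem_nhdsLE_iff_exists_Icc_subset.mp (mem_nhdsWithin_of_mem_nhds
    ((eventually_gt_nhds ht₀).and (ContinuousAt.eventually_lt ?_ ?_ ?_)))
  · have := Real.continuous_rpow_const hα.le
    fun_prop
  · exact Real.continuousAt_rpow_const _ _ (Or.inl ht₀.ne')
  · simpa [Real.zero_rpow hα.ne'] using Real.rpow_pos_of_pos ht₀ _

theorem SolvesVolterra.pos (h : SolvesVolterra α c g z) (hα : 0 < α) (hα1 : α ≤ 1) (hc : 0 ≤ c)
    (hz : Continuous z) (hg : MonotoneOn (fun t ↦ t ^ (1 - α) * g t) (Ioi 0)) (hg0 : 0 < g 0)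
    {t : ℝ} (ht : 0 ≤ t) : 0 < z t := by
  by_contra! hzt
  obtain ⟨t₀, ht₀, hzt₀, h_before⟩ :=
    exists_nonpos_forall_Ico_pos hz (h.apply_zero ▸ hg0) ht hzt
  obtain ⟨a, ha, h_small⟩ := exists_lt_forall_Icc_mul_rpow_lt_rpow hα (1 - α) ht₀
    (t₀ ^ (1 - α) * c / Real.Gamma (α + 1))
  -- The history on `[t₁, t₀]` is too short to bring `z` down from its maximum `z t₁`.
  obtain ⟨t₁, ht₁, h_max⟩ := isCompact_Icc.exists_isMaxOn (nonempty_Icc.mpr ha.le) hz.continuousOn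
  have ha_pos : 0 < a := (h_small a (left_mem_Icc.mpr ha.le)).1
  obtain ⟨ht₁_pos, h_small₁⟩ := h_small t₁ ht₁
  have hzt₁ : 0 < z t₁ := (h_before a ⟨ha_pos.le, ha⟩).trans_le (h_max (left_mem_Icc.mpr ha.le))
  have h_recent : fracIntegral α z t₁ t₀ t₀ ≤ z t₁ * ((t₀ - t₁) ^ α / Real.Gamma (α + 1)) := by
    rw [← fracIntegral_const hα]
    exact fracIntegral_mono hα hz continuous_const ht₁.2 le_rfl
      fun s hs ↦ h_max ⟨ht₁.1.trans hs.1.le, hs.2.le⟩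
  refine lt_irrefl (t₁ ^ (1 - α) * z t₁) ?_
  calc t₁ ^ (1 - α) * z t₁
      ≤ t₀ ^ (1 - α) * (z t₀ + c * fracIntegral α z t₁ t₀ t₀) :=
        h.rpow_mul_le_rpow_mul_add hα hα1 hc hz hg ht₁_pos ht₁.2
          fun s hs ↦ (h_before s ⟨hs.1.le, hs.2.trans_le ht₁.2⟩).le
    _ ≤ t₀ ^ (1 - α) * (0 + c * (z t₁ * ((t₀ - t₁) ^ α / Real.Gamma (α + 1)))) := by gcongr
    _ = t₀ ^ (1 - α) * c / Real.Gamma (α + 1) * (t₀ - t₁) ^ α * z t₁ := by ring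
    _ < t₁ ^ (1 - α) * z t₁ := by gcongr

lemma SolvesVolterra.pos_of_one (h : SolvesVolterra α c (fun _ ↦ 1) u) (hα : 0 < α) (hα1 : α ≤ 1)
    (hc : 0 ≤ c) (hu : Continuous u) {t : ℝ} (ht : 0 ≤ t) : 0 < u t :=
  h.pos hα hα1 hc hu (fun s hs _ _ hst ↦ mul_le_mul_of_nonneg_right
    (Real.rpow_le_rpow (mem_Ioi.mp hs).le hst (by linarith)) zero_le_one) one_pos ht

lemma SolvesVolterra.sub_comp_add_right (h_sol : SolvesVolterra α c (fun _ ↦ 1) u) (hα : 0 < α)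
    (hu : Continuous u) {h : ℝ} (hh : 0 ≤ h) :
    SolvesVolterra α c (fun t ↦ c * fracIntegral α u 0 h (t + h)) (fun t ↦ u t - u (t + h)) := by
  intro t ht
  have h_split := fracIntegral_add_adjacent hα hu 0 h (t + h) (t + h)
  have h_shift := fracIntegral_comp_add_right α u h 0 t t
  rw [zero_add] at h_shift
  rw [fracIntegral_sub hα hu (by fun_prop), h_shift]
  linear_combination h_sol t ht - h_sol (t + h) (by positivity) - c * h_split

lemma monotoneOn_rpow_mul_fracIntegral_add (hα : 0 < α) (hα1 : α ≤ 1) (hu : Continuous u) {h : ℝ}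
    (hh : 0 ≤ h) (hu_nonneg : ∀ s ∈ Ioo 0 h, 0 ≤ u s) :
    MonotoneOn (fun t ↦ t ^ (1 - α) * fracIntegral α u 0 h (t + h)) (Ioi 0) := by
  intro a ha b hb hab
  rw [mem_Ioi] at ha hb
  exact rpow_mul_fracIntegral_le hα hα1 hu hh hu_nonneg ha.le hb.le (by linarith) (by linarith)
    fun s hs ↦ by nlinarith [hs.2]

theorem SolvesVolterra.antitoneOn (h_sol : SolvesVolterra α c (fun _ ↦ 1) u) (hα : 0 < α)
    (hα1 : α ≤ 1) (hc : 0 < c) (hu : Continuous u) : AntitoneOn u (Ici 0) := by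
  intro a ha b _ hab
  rcases hab.eq_or_lt with rfl | hab
  · rfl
  obtain ⟨h, hh, rfl⟩ := exists_pos_add_of_lt' hab
  have hu_pos : ∀ s ∈ Ioo 0 h, 0 < u s := fun s hs ↦ h_sol.pos_of_one hα hα1 hc.le hu hs.1.le
  have h_mono :
      MonotoneOn (fun t ↦ t ^ (1 - α) * (c * fracIntegral α u 0 h (t + h))) (Ioi 0) := by
    simpa only [mul_left_comm _ c, Function.comp_def] using
      (monotone_mul_left_of_nonneg hc.le).comp_monotoneOn
        (monotoneOn_rpow_mul_fracIntegral_add hα hα1 hu hh.le fun s hs ↦ (hu_pos s hs).le)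
  have h_diff : 0 < u a - u (a + h) :=
    (h_sol.sub_comp_add_right hα hu hh.le).pos hα hα1 hc.le (by fun_prop) h_mono
      (mul_pos hc (fracIntegral_pos hα hu hh (by simp) hu_pos)) ha
  linarith

theorem SolvesVolterra.mul_rpow_div_Gamma_le_one (h : SolvesVolterra α c (fun _ ↦ 1) u)
    (hα : 0 < α) (hα1 : α ≤ 1) (hc : 0 < c) (hu : Continuous u) {t : ℝ} (ht : 0 ≤ t) :
    c * (u t * (t ^ α / Real.Gamma (α + 1))) ≤ 1 := by
  have h_le : u t * ((t - 0) ^ α / Real.Gamma (α + 1)) ≤ fracIntegral α u 0 t t := by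
    rw [← fracIntegral_const hα]
    exact fracIntegral_mono hα continuous_const hu ht le_rfl
      fun s hs ↦ h.antitoneOn hα hα1 hc hu hs.1.le ht hs.2.le
  rw [sub_zero] at h_le
  linear_combination h t ht + h.pos_of_one hα hα1 hc.le hu ht + c * h_le

end Volterra

section Bounds

variable {α : ℝ}

lemma solvesVolterra_mittagLeffler (hα : 0 < α) (c : ℝ) :
    SolvesVolterra α c (fun _ ↦ 1) (fun t ↦ mittagLeffler α (-c * t ^ α)) := by
  intro t ht
  rcases ht.eq_or_lt with rfl | ht
  · simp [fracIntegral_same, Real.zero_rpow hα.ne', mittagLeffler_zero]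
  · linear_combination mittagLeffler_mul_rpow_eq hα (-c) ht

lemma continuous_mittagLeffler_mul_rpow (hα : 0 < α) (c : ℝ) :
    Continuous fun t : ℝ ↦ mittagLeffler α (c * t ^ α) :=
  (continuous_mittagLeffler hα).comp ((Real.continuous_rpow_const hα.le).const_mul c)

theorem mittagLeffler_neg_pos (hα : 0 < α) (hα1 : α ≤ 1) {x : ℝ} (hx : 0 ≤ x) :
    0 < mittagLeffler α (-x) := by
  simpa using (solvesVolterra_mittagLeffler hα x).pos_of_one hα hα1 hx
    (continuous_mittagLeffler_mul_rpow hα (-x)) zero_le_one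

theorem mul_mittagLeffler_neg_le_Gamma (hα : 0 < α) (hα1 : α ≤ 1) {x : ℝ} (hx : 0 ≤ x) :
    x * mittagLeffler α (-x) ≤ Real.Gamma (α + 1) := by
  have hΓ : 0 < Real.Gamma (α + 1) := Real.Gamma_pos_of_pos (by positivity)
  rcases hx.eq_or_lt with rfl | hx
  · simpa using hΓ.le
  have h := (solvesVolterra_mittagLeffler hα x).mul_rpow_div_Gamma_le_one hα hα1 hx
    (continuous_mittagLeffler_mul_rpow hα (-x)) zero_le_one
  rw [Real.one_rpow, mul_one, mul_one_div, ← mul_div_assoc] at h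
  exact (div_le_one hΓ).mp h

lemma sq_mul_mittagLeffler_neg_sq_le (hα : 0 < α) (hα1 : α ≤ 1) {l t : ℝ} (hl : 0 ≤ l)
    (ht : 0 < t) :
    l ^ 2 * mittagLeffler α (-l * t ^ α) ^ 2 ≤ Real.Gamma (α + 1) ^ 2 * t ^ (-(2 * α)) := by
  have hx : 0 ≤ l * t ^ α := by positivity
  have h_sq := pow_le_pow_left₀ (mul_nonneg hx (mittagLeffler_neg_pos hα hα1 hx).le)
    (mul_mittagLeffler_neg_le_Gamma hα hα1 hx) 2
  have h_exp : t ^ (-(2 * α)) = ((t ^ α) ^ 2)⁻¹ := by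
    rw [Real.rpow_neg ht.le, mul_comm, Real.rpow_mul ht.le, Real.rpow_two]
  rw [h_exp, ← div_eq_mul_inv, le_div_iff₀ (by positivity), neg_mul]
  linear_combination h_sq

end Bounds

theorem series_bound_lambda_sq_general {ι : Type*} {α : ℝ} (hα : α ∈ Ioc 0 1) {c lam : ι → ℝ}
    (hc : Summable fun n ↦ c n ^ 2) (hlam : ∀ n, 0 ≤ lam n) {t : ℝ} (ht : 0 < t) :
    Summable (fun n ↦ c n ^ 2 * lam n ^ 2 * mittagLeffler α (-lam n * t ^ α) ^ 2) ∧
      ∑' n, c n ^ 2 * lam n ^ 2 * mittagLeffler α (-lam n * t ^ α) ^ 2 ≤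
        Real.Gamma (α + 1) ^ 2 * t ^ (-(2 * α)) * ∑' n, c n ^ 2 := by
  have h_le : ∀ n, c n ^ 2 * lam n ^ 2 * mittagLeffler α (-lam n * t ^ α) ^ 2 ≤
      Real.Gamma (α + 1) ^ 2 * t ^ (-(2 * α)) * c n ^ 2 := fun n ↦ by
    rw [mul_assoc, mul_comm]
    exact mul_le_mul_of_nonneg_right
      (sq_mul_mittagLeffler_neg_sq_le hα.1 hα.2 (hlam n) ht) (sq_nonneg _)
  have h_major := hc.mul_left (Real.Gamma (α + 1) ^ 2 * t ^ (-(2 * α)))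
  have h_summable := h_major.of_nonneg_of_le (fun n ↦ by positivity) h_le
  refine ⟨h_summable, ?_⟩
  rw [← tsum_mul_left]
  exact h_summable.tsum_le_tsum h_le h_major

theorem series_bound_lambda_sq (α : ℝ) (hα : α ∈ Set.Ioo (0:ℝ) 1) :
    ∃ C : ℝ, 0 < C ∧ ∀ (c lam : ℕ → ℝ), Summable (fun n => (c n) ^ 2) →
      (∀ n, 0 < lam n) → ∀ t : ℝ, 0 < t →
      Summable (fun n => (c n) ^ 2 * (lam n) ^ 2 *
        (mittagLeffler α (-(lam n) * t ^ α)) ^ 2) ∧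
      ∑' n, (c n) ^ 2 * (lam n) ^ 2 * (mittagLeffler α (-(lam n) * t ^ α)) ^ 2 ≤
        C ^ 2 * t ^ (-(2 * α)) * ∑' n, (c n) ^ 2 :=
  ⟨Real.Gamma (α + 1), Real.Gamma_pos_of_pos (add_pos hα.1 one_pos), fun _ _ hc hlam _ ht ↦
    series_bound_lambda_sq_general (Ioo_subset_Ioc_self hα) hc (fun n ↦ (hlam n).le) ht⟩
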